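/- Let Q be a finite quasigroup and suppose the tracks φ_i and φ_j are both special. Then φ_i(j) = α(φ_i(j)) for every automorphism α of Q. -/

import Mathlib

/-! Transporting the track of `i` along an automorphism `α` gives the track of `α i`, which is
therefore conjugate to the track of `i`. If no other track is conjugate to that of `i`, this forces
`α i = i`, and the track of `i` then commutes with `α`; evaluate at the fixed point `j`. -/

open Equiv (Perm)

/-- The permutation `φ` is the track (right middle translation) of index `i`. Working with a
predicate avoids choosing a division operation. -/
def IsTrack {M : Type*} [Mul M] (i : M) (φ : Perm M) : Prop :=
  ∀ x, x * φ x = i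

/-- The member `φ k` of a family in a monoid is special: no member with another index is conjugate
to it. For permutations of a finite type, conjugacy is equality of cycle types; the conjugacy
version also makes sense for infinite quasigroups. -/
def IsSpecial {ι G : Type*} [Monoid G] (φ : ι → G) (k : ι) : Prop :=
  ∀ m, m ≠ k → ¬ IsConj (φ m) (φ k)

theorem IsSpecial.eq_of_isConj {ι G : Type*} [Monoid G] {φ : ι → G} {k m : ι}
    (hk : IsSpecial φ k) (h : IsConj (φ m) (φ k)) : m = k :=
  not_imp_not.1 (hk m) h

theorem isSpecial_iff_cycleType_ne {ι X : Type*} [Fintype X] [DecidableEq X]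
    {φ : ι → Perm X} {k : ι} :
    IsSpecial φ k ↔ ∀ m, m ≠ k → (φ m).cycleType ≠ (φ k).cycleType := by
  simp only [IsSpecial, Equiv.Perm.isConj_iff_cycleType_eq, ne_eq]

theorem isConj_permCongr {X : Type*} (e φ : Perm X) : IsConj (e.permCongr φ) φ :=
  (isConj_iff.2 ⟨e, (e.permCongr_eq_mul φ).symm⟩).symm

namespace IsTrack

theorem permCongr {M N : Type*} [Mul M] [Mul N] {i : M} {φ : Perm M} (hφ : IsTrack i φ)
    (e : M ≃* N) : IsTrack (e i) (e.toEquiv.permCongr φ) := fun y ↦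
  calc
    y * e (φ (e.symm y)) = e (e.symm y * φ (e.symm y)) := by rw [map_mul, e.apply_symm_apply]
    _ = e i := by rw [hφ]

theorem unique {M : Type*} [Mul M] [IsLeftCancelMul M] {i : M} {φ ψ : Perm M}
    (hφ : IsTrack i φ) (hψ : IsTrack i ψ) : φ = ψ :=
  Equiv.ext fun x ↦ mul_left_cancel ((hφ x).trans (hψ x).symm)

end IsTrack

section Automorphism

variable {Q : Type*} [Mul Q] [IsLeftCancelMul Q] {φ : Q → Perm Q}

theorem track_mulAut_apply (hφ : ∀ i, IsTrack i (φ i)) (α : MulAut Q) (i : Q) :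
    φ (α i) = α.toEquiv.permCongr (φ i) :=
  (hφ (α i)).unique ((hφ i).permCongr α)

theorem IsSpecial.mulAut_apply_eq {k : Q} (hk : IsSpecial φ k) (hφ : ∀ i, IsTrack i (φ i))
    (α : MulAut Q) : α k = k := by
  apply hk.eq_of_isConj
  rw [track_mulAut_apply hφ]
  exact isConj_permCongr α.toEquiv (φ k)

theorem two_special_tracks_value_fixed_general (hφ : ∀ i, IsTrack i (φ i)) {i j : Q}
    (hi : IsSpecial φ i) (hj : IsSpecial φ j) (α : MulAut Q) : φ i j = α (φ i j) :=
  have hαi : α i = i := hi.mulAut_apply_eq hφ α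
  have hαj : α j = j := hj.mulAut_apply_eq hφ α
  calc
    φ i j = φ (α i) (α j) := by rw [hαi, hαj]
    _ = α (φ i (α.symm (α j))) := by rw [track_mulAut_apply hφ]; rfl
    _ = α (φ i j) := by rw [α.symm_apply_apply]

end Automorphism

/-- If the tracks `φ i` and `φ j` of a finite quasigroup are both
special, then `φ i j = α (φ i j)` for every automorphism `α`. -/
theorem two_special_tracks_value_fixed {Q : Type*} [Fintype Q] [DecidableEq Q] [Mul Q]
    (hL : ∀ a : Q, Function.Bijective (fun x : Q => a * x))
    (hR : ∀ a : Q, Function.Bijective (fun x : Q => x * a))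
    (φ : Q → Equiv.Perm Q)
    (hφ : ∀ i x : Q, x * φ i x = i)
    (i j : Q)
    (hi : ∀ m : Q, m ≠ i → (φ m).cycleType ≠ (φ i).cycleType)
    (hj : ∀ m : Q, m ≠ j → (φ m).cycleType ≠ (φ j).cycleType)
    (α : Equiv.Perm Q)
    (hα : ∀ x y : Q, α (x * y) = α x * α y) :
    φ i j = α (φ i j) := by
  have : IsLeftCancelMul Q := ⟨fun a ↦ (hL a).injective⟩
  exact two_special_tracks_value_fixed_general hφ (isSpecial_iff_cycleType_ne.2 hi)
    (isSpecial_iff_cycleType_ne.2 hj) ⟨α, hα⟩
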